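/- Let B and R be unital associative ℂ-algebras. Suppose B carries a complete orthogonal set of idempotents ε_1, …, ε_r and a two-sided ideal B̄ with B = span_ℂ{ε_1,…,ε_r} ⊕ B̄ as ℂ-vector spaces, and R carries a complete orthogonal set of idempotents e_1, …, e_r and a nilpotent two-sided ideal 𝔪 with R = span_ℂ{e_1,…,e_r} ⊕ 𝔪 as ℂ-vector spaces. Let X be the set of ℂ-algebra homomorphisms f : B → R with f(B̄) ⊆ 𝔪 and f(ε_i) − e_i ∈ 𝔪 for all i, modulo the equivalence relation f ∼ (u f u⁻¹ : b ↦ u·f(b)·u⁻¹) for units u of R; and let Y be the set of ℂ-algebra homomorphisms g : B → R with g(B̄) ⊆ 𝔪 and g(ε_i) = e_i for all i, modulo the equivalence g ∼ v g v⁻¹ for units v of R lying in the subalgebra ⊕_{i=1}^r e_i R e_i. Then the inclusion of the second set of homomorphisms into the first induces a bijection Y → X of quotient sets. -/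

import Mathlib

/-!
For a map `f` in the larger class let `p i = f (ε i)`. The element `u = ∑ i, p i * e i` satisfies
`u * e j = p j * e j = p j * u`, and it is a unit because `u ≡ ∑ i, e i * e i = 1` modulo `𝔪`.
Hence `b ↦ u⁻¹ * f b * u` sends `ε i` to `e i`. Conversely, a unit conjugating one map with
`ε i ↦ e i` to another commutes with every `e i`, so it already lies in `⨁ i, e i R e i`.
-/

section Idempotents

variable {R ι : Type*} [Fintype ι]

lemma semiconjBy_sum_mul_of_orthogonalIdempotents [Semiring R] {p e : ι → R}
    (hp : OrthogonalIdempotents p) (he : OrthogonalIdempotents e) (j : ι) :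
    SemiconjBy (∑ i, p i * e i) (e j) (p j) := by
  classical
  calc (∑ i, p i * e i) * e j = p j * e j := by simp [Finset.sum_mul, mul_assoc, he.mul_eq]
    _ = p j * ∑ i, p i * e i := by simp [Finset.mul_sum, ← mul_assoc, hp.mul_eq]

lemma eq_sum_mul_mul_of_commute_completeOrthogonalIdempotents [Semiring R] {e : ι → R}
    (he : CompleteOrthogonalIdempotents e) {x : R} (hx : ∀ i, Commute (e i) x) :
    x = ∑ i, e i * x * e i := by
  calc x = (∑ i, e i) * x := by rw [he.complete, one_mul]
    _ = ∑ i, e i * x := Finset.sum_mul ..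
    _ = ∑ i, e i * x * e i :=
      Finset.sum_congr rfl fun i _ => by rw [mul_assoc, ← (hx i).eq, ← mul_assoc, (he.idem i).eq]

variable [Ring R] {p e : ι → R} {I : Ideal R} [I.IsTwoSided]

lemma sum_mul_sub_one_mem_of_sub_mem (he : CompleteOrthogonalIdempotents e)
    (hpe : ∀ i, p i - e i ∈ I) : ∑ i, p i * e i - 1 ∈ I := by
  have sum_sub : ∑ i, p i * e i - 1 = ∑ i, (p i - e i) * e i := by
    simp only [sub_mul, Finset.sum_sub_distrib, (he.idem _).eq, he.complete]
  rw [sum_sub]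
  exact I.sum_mem fun i _ => I.mul_mem_right _ (hpe i)

lemma exists_units_semiconjBy_of_sub_mem (hp : OrthogonalIdempotents p)
    (he : CompleteOrthogonalIdempotents e) (hI : ∀ x ∈ I, IsUnit (1 + x))
    (hpe : ∀ i, p i - e i ∈ I) : ∃ u : Rˣ, ∀ i, SemiconjBy (u : R) (e i) (p i) := by
  obtain ⟨u, hu⟩ : IsUnit (∑ i, p i * e i) := by
    simpa only [add_sub_cancel] using hI _ (sum_mul_sub_one_mem_of_sub_mem he hpe)
  exact ⟨u, hu ▸ semiconjBy_sum_mul_of_orthogonalIdempotents hp he.toOrthogonalIdempotents⟩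

end Idempotents

lemma isNilpotent_of_forall_list_prod_eq_zero {M : Type*} [MonoidWithZero M] {S : Set M} {n : ℕ}
    (hS : ∀ l : List M, l.length = n → (∀ x ∈ l, x ∈ S) → l.prod = 0) {x : M} (hx : x ∈ S) :
    IsNilpotent x := by
  refine ⟨n, ?_⟩
  rw [← List.prod_replicate]
  exact hS _ List.length_replicate fun y hy => List.eq_of_mem_replicate hy ▸ hx

section Conjugation

variable {k B R ι : Type*} [CommSemiring k] [Semiring B] [Algebra k B] [Ring R] [Algebra k R]
  [Fintype ι] {ε : ι → B} {e : ι → R}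

lemma exists_algHom_conj_eq_on_idempotents {S : Set B} {I : Ideal R} [I.IsTwoSided]
    (hε : OrthogonalIdempotents ε) (he : CompleteOrthogonalIdempotents e)
    (hI : ∀ x ∈ I, IsUnit (1 + x)) {f : B →ₐ[k] R} (hfS : ∀ b ∈ S, f b ∈ I)
    (hfε : ∀ i, f (ε i) - e i ∈ I) :
    ∃ g : B →ₐ[k] R, ((∀ b ∈ S, g b ∈ I) ∧ ∀ i, g (ε i) = e i) ∧
      ∃ u : Rˣ, ∀ b, f b = (u : R) * g b * ((u⁻¹ : Rˣ) : R) := by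
  obtain ⟨u, hu⟩ := exists_units_semiconjBy_of_sub_mem (hε.map f.toRingHom) he hI hfε
  let g : B →ₐ[k] R := (MulSemiringAction.toAlgHom k R (ConjAct.toConjAct u⁻¹)).comp f
  have g_apply (b : B) : g b = ↑u⁻¹ * f b * u := by simp [g, ConjAct.units_smul_def]
  refine ⟨g, ⟨fun b hb => ?_, fun i => ?_⟩, u, fun b => ?_⟩
  · rw [g_apply]
    exact I.mul_mem_right _ (I.mul_mem_left _ (hfS b hb))
  · have fε_mul : f (ε i) * u = u * e i := (hu i).eq.symm
    rw [g_apply, mul_assoc, fε_mul, Units.inv_mul_cancel_left]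
  · rw [g_apply, mul_assoc, Units.mul_inv_cancel_right, Units.mul_inv_cancel_left]

lemma eq_sum_mul_mul_of_algHom_conj_eq {g g' : B →ₐ[k] R} (he : CompleteOrthogonalIdempotents e)
    (hg : ∀ i, g (ε i) = e i) (hg' : ∀ i, g' (ε i) = e i) {u : Rˣ}
    (hu : ∀ b, g' b = (u : R) * g b * ((u⁻¹ : Rˣ) : R)) : (u : R) = ∑ i, e i * (u : R) * e i := by
  refine eq_sum_mul_mul_of_commute_completeOrthogonalIdempotents he fun i => ?_
  have conj_e : e i = u * e i * ↑u⁻¹ := by simpa only [hg, hg'] using hu (ε i)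
  exact u.eq_mul_inv_iff_mul_eq.mp conj_e

theorem stmt_2_general (hε : OrthogonalIdempotents ε) (he : CompleteOrthogonalIdempotents e)
    (Bbar : Set B) (𝔪 : Ideal R) [𝔪.IsTwoSided] (h𝔪 : ∀ x ∈ 𝔪, IsUnit (1 + x)) :
    (∀ f : B →ₐ[k] R, ((∀ b ∈ Bbar, f b ∈ 𝔪) ∧ ∀ i, f (ε i) - e i ∈ 𝔪) →
      ∃ g : B →ₐ[k] R, ((∀ b ∈ Bbar, g b ∈ 𝔪) ∧ ∀ i, g (ε i) = e i) ∧
        ∃ u : Rˣ, ∀ b, f b = (u : R) * g b * ((u⁻¹ : Rˣ) : R)) ∧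
    (∀ g g' : B →ₐ[k] R, ((∀ b ∈ Bbar, g b ∈ 𝔪) ∧ ∀ i, g (ε i) = e i) →
      ((∀ b ∈ Bbar, g' b ∈ 𝔪) ∧ ∀ i, g' (ε i) = e i) →
      (∃ u : Rˣ, ∀ b, g' b = (u : R) * g b * ((u⁻¹ : Rˣ) : R)) →
      ∃ v : Rˣ, (v : R) = ∑ i, e i * (v : R) * e i ∧
        ∀ b, g' b = (v : R) * g b * ((v⁻¹ : Rˣ) : R)) :=
  ⟨fun _ ⟨hfB, hfε⟩ => exists_algHom_conj_eq_on_idempotents hε he h𝔪 hfB hfε,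
    fun _ _ hg hg' ⟨u, hu⟩ => ⟨u, eq_sum_mul_mul_of_algHom_conj_eq he hg.2 hg'.2 hu, hu⟩⟩

end Conjugation


/-- **Augmentation-preserving `ℂ`-algebra maps modulo inner automorphisms coincide with
augmented `ℂ^r`-algebra maps modulo inner `ℂ^r`-algebra automorphisms.**

`B` and `R` are augmented `ℂ^r`-algebras (complete orthogonal idempotents `ε`, `e` and
two-sided ideals `Bbar`, `𝔪` complementing their spans), with `𝔪` nilpotent.  Let `X` be
the set of `ℂ`-algebra maps `f : B → R` with `f Bbar ⊆ 𝔪` and `f (ε i) ≡ e i mod 𝔪`,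
modulo conjugation by arbitrary units of `R`, and `Y` the set of such maps with
`g (ε i) = e i`, modulo conjugation by units lying in `⊕ᵢ eᵢ R eᵢ`.  Then the inclusion
induces a bijection `Y → X`: it is surjective (every class in `X` contains a map fixing
the idempotents) and injective (two such maps conjugate by an arbitrary unit are already
conjugate by a unit of `⊕ᵢ eᵢ R eᵢ`). -/
theorem stmt_2 (B R : Type*) [Ring B] [Algebra ℂ B] [Ring R] [Algebra ℂ R]
    (r : ℕ) (ε : Fin r → B) (e : Fin r → R)
    (hε : CompleteOrthogonalIdempotents ε) (he : CompleteOrthogonalIdempotents e)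
    (Bbar : Submodule ℂ B)
    (hBl : ∀ x ∈ Bbar, ∀ y : B, y * x ∈ Bbar) (hBr : ∀ x ∈ Bbar, ∀ y : B, x * y ∈ Bbar)
    (hBcompl : IsCompl (Submodule.span ℂ (Set.range ε)) Bbar)
    (𝔪 : Submodule ℂ R)
    (hml : ∀ x ∈ 𝔪, ∀ y : R, y * x ∈ 𝔪) (hmr : ∀ x ∈ 𝔪, ∀ y : R, x * y ∈ 𝔪)
    (hnil : ∃ n : ℕ, 1 ≤ n ∧ ∀ l : List R, l.length = n → (∀ x ∈ l, x ∈ 𝔪) → l.prod = 0)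
    (hmcompl : IsCompl (Submodule.span ℂ (Set.range e)) 𝔪)
    -- the two classes of homomorphisms
    (Xpred : (B →ₐ[ℂ] R) → Prop)
    (hX : ∀ f, Xpred f ↔ ((∀ b ∈ Bbar, f b ∈ 𝔪) ∧ ∀ i, f (ε i) - e i ∈ 𝔪))
    (Ypred : (B →ₐ[ℂ] R) → Prop)
    (hY : ∀ g, Ypred g ↔ ((∀ b ∈ Bbar, g b ∈ 𝔪) ∧ ∀ i, g (ε i) = e i)) :
    -- surjectivity on classes
    ((∀ f, Xpred f → ∃ g, Ypred g ∧
        ∃ u : Rˣ, ∀ b, f b = (u : R) * g b * ((u⁻¹ : Rˣ) : R)) ∧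
    -- injectivity on classes
      (∀ g g', Ypred g → Ypred g' →
        (∃ u : Rˣ, ∀ b, g' b = (u : R) * g b * ((u⁻¹ : Rˣ) : R)) →
        (∃ v : Rˣ, (v : R) = ∑ i, e i * (v : R) * e i ∧
          ∀ b, g' b = (v : R) * g b * ((v⁻¹ : Rˣ) : R)))) := by
  obtain ⟨n, -, hn⟩ := hnil
  let I : Ideal R := { 𝔪 with smul_mem' := fun y x hx => hml x hx y }
  have : I.IsTwoSided := ⟨fun y hx => hmr _ hx y⟩
  simp only [hX, hY]
  exact stmt_2_general hε.toOrthogonalIdempotents he Bbar I fun x hx =>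
    (isNilpotent_of_forall_list_prod_eq_zero (S := (𝔪 : Set R)) hn hx).isUnit_one_add
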